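/- arXiv:2001.03865 — 3 statements merged into one kernel-verified Lean document; each statement's English description precedes it below -/
import Mathlib

section
/- Let μ₋, μ₊ ∈ M₅(ℂ) with det μ₋ = 1, let E ∈ M₅(ℂ) be an invertible diagonal matrix, and let S ∈ M₅(ℂ) be invertible with μ₋E = μ₊ES. Set R = S⁻¹. Let P₁ ∈ M₅(ℂ) be the matrix whose first four columns are the first four columns of μ₋ and whose fifth column is the fifth column of μ₊. Then det P₁ = R_{55}, the (5,5)-entry of R. -/
open Complex Matrix

noncomputable section

/-- For Jost solutions related by `μ₋E = μ₊ES`, the matrix `P₁` with columns 1–4 from `μ₋`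
and column 5 from `μ₊` has determinant equal to the `(5,5)` entry of `R = S⁻¹`. -/
theorem detP1_eq_r55 (μm μp : Matrix (Fin 5) (Fin 5) ℂ)
    (hμm : μm.det = 1)
    (d : Fin 5 → ℂ) (hd : ∀ i, d i ≠ 0)
    (S : Matrix (Fin 5) (Fin 5) ℂ) (hS : IsUnit S.det)
    (hrel : μm * Matrix.diagonal d = μp * Matrix.diagonal d * S)
    (P₁ : Matrix (Fin 5) (Fin 5) ℂ)
    (hP₁ : P₁ = Matrix.of fun (i j : Fin 5) => if (j : ℕ) < 4 then μm i j else μp i j) :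
    P₁.det = S⁻¹ 4 4 := by
  have hR : μp * Matrix.diagonal d = μm * Matrix.diagonal d * S⁻¹ := by
    rw [hrel, Matrix.mul_assoc _ S, Matrix.mul_nonsing_inv S hS, Matrix.mul_one]
  have hX : μm.adjugate * μp * Matrix.diagonal d = Matrix.diagonal d * S⁻¹ := by
    rw [Matrix.mul_assoc, hR, ← Matrix.mul_assoc, ← Matrix.mul_assoc, Matrix.adjugate_mul, hμm,
      one_smul, Matrix.one_mul]
  have h44 := congrFun (congrFun hX 4) 4
  rw [Matrix.mul_diagonal, Matrix.diagonal_mul, mul_comm] at h44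
  have hP : P₁ = μm.updateCol 4 (fun i => μp i 4) := by
    rw [hP₁]
    ext i j
    fin_cases j <;> simp [Matrix.updateCol_apply]
  rw [hP, ← Matrix.cramer_apply, Matrix.cramer_eq_adjugate_mulVec, ← mul_left_cancel₀ (hd 4) h44]
  rfl
end
end

section
/- Let μ₋, μ₊ ∈ M₅(ℂ) be invertible with det μ₋ = 1, let E ∈ M₅(ℂ) be an invertible diagonal matrix, and let S ∈ M₅(ℂ) satisfy μ₋E = μ₊ES. Let P₂ ∈ M₅(ℂ) be the matrix whose first four rows are the first four rows of μ₋⁻¹ and whose fifth row is the fifth row of μ₊⁻¹. Then det P₂ = S_{55}, the (5,5)-entry of S. -/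
open Complex Matrix

noncomputable section

/-- For Jost solutions related by `μ₋E = μ₊ES`, the matrix `P₂` with rows 1–4 from `μ₋⁻¹`
and row 5 from `μ₊⁻¹` has determinant equal to the `(5,5)` entry of `S`. -/
theorem detP2_eq_s55 (μm μp : Matrix (Fin 5) (Fin 5) ℂ)
    (hμm : μm.det = 1) (hμp : IsUnit μp.det)
    (d : Fin 5 → ℂ) (hd : ∀ i, d i ≠ 0)
    (S : Matrix (Fin 5) (Fin 5) ℂ)
    (hrel : μm * Matrix.diagonal d = μp * Matrix.diagonal d * S)
    (P₂ : Matrix (Fin 5) (Fin 5) ℂ)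
    (hP₂ : P₂ = Matrix.of fun (i j : Fin 5) => if (i : ℕ) < 4 then μm⁻¹ i j else μp⁻¹ i j) :
    P₂.det = S 4 4 := by
  have hm : IsUnit μm.det := by rw [hμm]; exact isUnit_one
  have h1 : μm⁻¹ * μm = 1 := Matrix.nonsing_inv_mul _ hm
  have hX : (μp⁻¹ * μm) * Matrix.diagonal d = Matrix.diagonal d * S := by
    rw [Matrix.mul_assoc, hrel, Matrix.mul_assoc, Matrix.nonsing_inv_mul_cancel_left _ _ hμp]
  have h44 : (μp⁻¹ * μm) 4 4 = S 4 4 := by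
    have h := congrFun (congrFun hX 4) 4
    rw [Matrix.mul_diagonal, Matrix.diagonal_mul, mul_comm] at h
    exact mul_left_cancel₀ (hd 4) h
  have hent : ∀ i j, (P₂ * μm) i j =
      if (i : ℕ) < 4 then (1 : Matrix (Fin 5) (Fin 5) ℂ) i j else (μp⁻¹ * μm) i j := by
    intro i j
    rw [← h1, hP₂]
    by_cases hi : (i : ℕ) < 4 <;> simp [Matrix.mul_apply, hi]
  have hdet : (P₂ * μm).det = P₂.det := by rw [Matrix.det_mul, hμm, mul_one]
  rw [← hdet, Matrix.det_of_isLowerTriangular, Fin.prod_univ_five]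
  · simp [hent, h44]
  · intro i j hij
    have hij' : i < j := hij
    rw [hent, if_pos (by omega), Matrix.one_apply_ne hij'.ne]
end
end

section
/- Let B ∈ M₅(ℂ) be invertible with B = B₄ ⊕ (−1) block-diagonal (i.e., B_{k5} = B_{5k} = 0 for k ≤ 4, B_{55} = −1). Let μ₋, μ₊, ν₋, ν₊ ∈ M₅(ℂ) be invertible and satisfy B⁻¹ ν₋† B = μ₋⁻¹ and B⁻¹ ν₊† B = μ₊⁻¹. Let P₁ be the matrix whose first four columns are the first four columns of ν₋ and whose fifth column is the fifth column of ν₊, and let P₂ be the matrix whose first four rows are the first four rows of μ₋⁻¹ and whose fifth row is the fifth row of μ₊⁻¹. Then P₁† = B P₂ B⁻¹. -/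
open Complex Matrix

noncomputable section

/-- The symmetry `P₁† = B P₂ B⁻¹` between the two sectionally analytic matrices of the
Riemann–Hilbert problem. -/
theorem P1_P2_symmetry
    (B : Matrix (Fin 5) (Fin 5) ℂ) (hB : IsUnit B.det)
    (hBblock : ∀ k : Fin 5, (k : ℕ) < 4 → B k 4 = 0 ∧ B 4 k = 0)
    (hB55 : B 4 4 = -1)
    (μm μp νm νp : Matrix (Fin 5) (Fin 5) ℂ)
    (hμm : IsUnit μm.det) (hμp : IsUnit μp.det)
    (hνm : IsUnit νm.det) (hνp : IsUnit νp.det)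
    (hm : B⁻¹ * νmᴴ * B = μm⁻¹) (hp : B⁻¹ * νpᴴ * B = μp⁻¹)
    (P₁ P₂ : Matrix (Fin 5) (Fin 5) ℂ)
    (hP₁ : P₁ = Matrix.of fun (i j : Fin 5) => if (j : ℕ) < 4 then νm i j else νp i j)
    (hP₂ : P₂ = Matrix.of fun (i j : Fin 5) => if (i : ℕ) < 4 then μm⁻¹ i j else μp⁻¹ i j) :
    P₁ᴴ = B * P₂ * B⁻¹ := by
  have e1 : νmᴴ * B = B * μm⁻¹ := by
    rw [← hm, Matrix.mul_assoc, Matrix.mul_nonsing_inv_cancel_left _ _ hB]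
  have e2 : νpᴴ * B = B * μp⁻¹ := by
    rw [← hp, Matrix.mul_assoc, Matrix.mul_nonsing_inv_cancel_left _ _ hB]
  have key : P₁ᴴ * B = B * P₂ := by
    ext i j
    by_cases hi : (i : ℕ) < 4
    · have h := congrFun (congrFun e1 i) j
      have hL : (P₁ᴴ * B) i j = (νmᴴ * B) i j := by
        simp only [Matrix.mul_apply, hP₁, Matrix.conjTranspose_apply, Matrix.of_apply, if_pos hi]
      rw [hL, h]
      simp only [Matrix.mul_apply, hP₂, Matrix.of_apply]
      refine Finset.sum_congr rfl fun k _ => ?_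
      by_cases hk : (k : ℕ) < 4
      · rw [if_pos hk]
      · have : k = 4 := by apply Fin.ext; simp; omega
        rw [this, (hBblock i hi).1, zero_mul, zero_mul]
    · have h := congrFun (congrFun e2 i) j
      have hL : (P₁ᴴ * B) i j = (νpᴴ * B) i j := by
        simp only [Matrix.mul_apply, hP₁, Matrix.conjTranspose_apply, Matrix.of_apply, if_neg hi]
      rw [hL, h]
      have hi4 : i = 4 := by apply Fin.ext; simp; omega
      simp only [Matrix.mul_apply, hP₂, Matrix.of_apply]
      refine Finset.sum_congr rfl fun k _ => ?_
      by_cases hk : (k : ℕ) < 4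
      · rw [hi4, (hBblock k hk).2, zero_mul, zero_mul]
      · rw [if_neg hk]
  rw [← key, Matrix.mul_nonsing_inv_cancel_right _ _ hB]
end
end
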